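/- For all natural numbers m,n with m,n ∉ {1,2}, the X₂^{(1)}-Hermite polynomials H⁽¹⁾_n := Wr(H₁,H₂,H_n) satisfy ∫_ℝ H⁽¹⁾_m(x)·H⁽¹⁾_n(x)·e^{−x²}/(4(1+2x²))² dx = √π·2^{n+2}·n!·(n−1)(n−2) if m = n, and the integral equals 0 if m ≠ n. -/

import Mathlib

/-- Physicists' Hermite polynomials via the Rodrigues formula. -/
noncomputable def Hr (n : ℕ) (x : ℝ) : ℝ :=
  (-1) ^ n * Real.exp (x ^ 2) * iteratedDeriv n (fun t => Real.exp (-t ^ 2)) x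

/-- Wronskian of three functions. -/
noncomputable def Wr (f g h : ℝ → ℝ) (x : ℝ) : ℝ :=
  Matrix.det !![f x, g x, h x;
                deriv f x, deriv g x, deriv h x;
                deriv (deriv f) x, deriv (deriv g) x, deriv (deriv h) x]

/-- The X₂⁽¹⁾-Hermite polynomials. -/
noncomputable def H1exc (n : ℕ) (x : ℝ) : ℝ := Wr (Hr 1) (Hr 2) (Hr n) x

open Polynomial MeasureTheory in
noncomputable def hP : ℕ → ℝ[X]
  | 0 => 1
  | n + 1 => C 2 * X * hP n - derivative (hP n)

open Polynomial MeasureTheory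

theorem hP_succ (n : ℕ) : hP (n + 1) = C 2 * X * hP n - derivative (hP n) := rfl

theorem hP_der (n : ℕ) : derivative (hP (n + 1)) = C (2 * ((n : ℝ) + 1)) * hP n := by
  induction n with
  | zero => simp [hP]
  | succ k ih =>
    rw [hP_succ (k + 1), derivative_sub, ih, derivative_mul, derivative_mul, derivative_mul, ih]
    simp only [derivative_C, derivative_X]
    rw [hP_succ k]
    simp only [C_mul, C_add, Nat.cast_add, Nat.cast_one, C_1]
    ring

theorem hP_ode (n : ℕ) : derivative (derivative (hP n))
    = C 2 * X * derivative (hP n) - C (2 * (n : ℝ)) * hP n := by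
  cases n with
  | zero => simp [hP]
  | succ k =>
    have h := hP_succ k
    have h2 : derivative (hP k) = C 2 * X * hP k - hP (k + 1) := by rw [h]; ring
    rw [hP_der, derivative_mul, derivative_C, h2]
    push_cast
    ring

theorem w_der (x : ℝ) : HasDerivAt (fun t : ℝ => Real.exp (-t ^ 2))
    (-(2 * x) * Real.exp (-x ^ 2)) x := by
  have := ((hasDerivAt_pow 2 x).neg).exp
  refine this.congr_deriv ?_
  simp only [Pi.neg_apply]
  push_cast
  ring

theorem iter_w (n : ℕ) : iteratedDeriv n (fun t : ℝ => Real.exp (-t ^ 2))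
    = fun x => (-1) ^ n * (hP n).eval x * Real.exp (-x ^ 2) := by
  induction n with
  | zero => simp [hP]
  | succ k ih =>
    rw [iteratedDeriv_succ, ih]
    funext x
    have h := (((hP k).hasDerivAt x).const_mul ((-1) ^ k)).mul (w_der x)
    refine h.deriv.trans ?_
    simp only [hP_succ, eval_sub, eval_mul, eval_C, eval_X]
    ring

theorem Hr_eq (n : ℕ) : Hr n = fun x => (hP n).eval x := by
  funext x
  rw [Hr, iter_w]
  have h1 : Real.exp (x ^ 2) * Real.exp (-x ^ 2) = 1 := by
    rw [← Real.exp_add]; simp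
  have h2 : ((-1 : ℝ) ^ n) * (-1) ^ n = 1 := by
    rw [← mul_pow]; simp
  linear_combination (hP n).eval x * ((-1) ^ n * (-1) ^ n) * h1 + (hP n).eval x * h2

theorem integ_poly (q : ℝ[X]) : Integrable (fun x : ℝ => q.eval x * Real.exp (-x ^ 2)) := by
  induction q using Polynomial.induction_on' with
  | add p q hp hq =>
    refine (hp.add hq).congr (.of_forall fun x => ?_)
    simp [add_mul]
  | monomial n a =>
    have h := integrable_rpow_mul_exp_neg_mul_sq (b := 1) one_pos (s := (n : ℝ))
      (by have : (0 : ℝ) ≤ n := n.cast_nonneg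
          linarith)
    refine (h.const_mul a).congr (.of_forall fun x => ?_)
    simp [mul_assoc]

theorem integ_rat (q : ℝ[X]) (k : ℕ) :
    Integrable (fun x : ℝ => q.eval x * Real.exp (-x ^ 2) / (1 + 2 * x ^ 2) ^ k) := by
  refine (integ_poly q).mono (Continuous.aestronglyMeasurable ?_) (.of_forall fun x => ?_)
  · refine Continuous.div (by fun_prop) (by fun_prop) (fun x => by positivity)
  · rw [norm_div]
    refine div_le_self (norm_nonneg _) ?_
    rw [norm_pow]
    apply one_le_pow₀
    rw [Real.norm_of_nonneg (by positivity)]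
    nlinarith [sq_nonneg x]

theorem int_der (q : ℝ[X]) :
    ∫ x : ℝ, (derivative q - C 2 * X * q).eval x * Real.exp (-x ^ 2) = 0 := by
  refine integral_eq_zero_of_hasDerivAt_of_integrable (f := fun x => q.eval x * Real.exp (-x ^ 2))
    (fun x => ?_) (integ_poly _) (integ_poly _)
  refine ((q.hasDerivAt x).mul (w_der x)).congr_deriv ?_
  simp only [eval_sub, eval_mul, eval_C, eval_X]
  ring

theorem int_step (q : ℝ[X]) (n : ℕ) :
    ∫ x : ℝ, (q * hP (n + 1)).eval x * Real.exp (-x ^ 2)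
      = ∫ x : ℝ, (derivative q * hP n).eval x * Real.exp (-x ^ 2) := by
  have h := int_der (q * hP n)
  rw [← sub_eq_zero, ← integral_sub (integ_poly _) (integ_poly _), ← neg_eq_zero, ← integral_neg,
    ← h]
  congr 1
  funext x
  simp [hP_succ]; ring

theorem orth_lt (m n : ℕ) (h : m < n) :
    ∫ x : ℝ, (hP m * hP n).eval x * Real.exp (-x ^ 2) = 0 := by
  induction m generalizing n with
  | zero =>
    obtain ⟨k, rfl⟩ := Nat.exists_eq_succ_of_ne_zero h.ne'
    rw [int_step]; simp [hP]
  | succ m ih =>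
    obtain ⟨k, rfl⟩ := Nat.exists_eq_succ_of_ne_zero (Nat.ne_zero_of_lt h)
    rw [Nat.succ_eq_add_one, int_step, hP_der]
    simp only [mul_assoc, eval_mul, eval_C]
    simp only [integral_const_mul]
    have := ih k (by omega)
    simp only [eval_mul, mul_assoc] at this
    simp [this]

theorem orth_eq (n : ℕ) :
    ∫ x : ℝ, (hP n * hP n).eval x * Real.exp (-x ^ 2)
      = Real.sqrt Real.pi * 2 ^ n * (Nat.factorial n) := by
  induction n with
  | zero =>
    have := integral_gaussian 1
    simpa [hP] using this
  | succ m ih =>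
    rw [int_step, hP_der]
    simp only [mul_assoc, eval_mul, eval_C] at ih ⊢
    simp only [integral_const_mul]
    rw [ih, Nat.factorial_succ]
    push_cast
    ring

theorem orth (m n : ℕ) :
    ∫ x : ℝ, (hP m * hP n).eval x * Real.exp (-x ^ 2)
      = if m = n then Real.sqrt Real.pi * 2 ^ n * (Nat.factorial n) else 0 := by
  split_ifs with h
  · subst h; exact orth_eq m
  · rcases lt_or_gt_of_ne h with h | h
    · exact orth_lt m n h
    · rw [mul_comm]; exact orth_lt n m h

noncomputable def hN (n : ℕ) : ℝ[X] :=
  (1 + C 2 * X ^ 2) * derivative (derivative (hP n)) - C 4 * X * derivative (hP n) + C 4 * hP n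

theorem poly_deriv (q : ℝ[X]) : deriv (fun x => q.eval x) = fun x => (derivative q).eval x := by
  funext x; exact q.deriv

theorem H1exc_eq (n : ℕ) (x : ℝ) : H1exc n x = 4 * (hN n).eval x := by
  simp only [H1exc, Wr, Hr_eq, poly_deriv, Matrix.det_fin_three]
  simp [hP, hN]
  ring

noncomputable def hQ (m n : ℕ) : ℝ[X] :=
  derivative (hP m) * hN n - hP m * derivative (hN n) + C 2 * X * hP m * hN n

theorem key (m n : ℕ) (x : ℝ) :
    HasDerivAt (fun x : ℝ => (hQ m n).eval x * Real.exp (-x ^ 2) / (1 + 2 * x ^ 2) ^ 1)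
      ((hN m * hN n).eval x * Real.exp (-x ^ 2) / (1 + 2 * x ^ 2) ^ 2
        - 4 * (((n : ℝ) - 1) * ((n : ℝ) - 2)) * ((hP m * hP n).eval x * Real.exp (-x ^ 2))) x := by
  have hp : (1 + 2 * x ^ 2) ≠ 0 := by positivity
  have hd : HasDerivAt (fun x : ℝ => (1 + 2 * x ^ 2) ^ 1) (4 * x) x := by
    have := ((hasDerivAt_pow 2 x).const_mul 2).const_add 1
    simp only [pow_one]
    refine this.congr_deriv ?_
    push_cast
    ring
  have h := (((hQ m n).hasDerivAt x).mul (w_der x)).div hd (by simpa using hp)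
  refine h.congr_deriv ?_
  simp only [hQ, hN, derivative_add, derivative_sub, derivative_mul, derivative_C, derivative_X,
    derivative_one, derivative_X_pow, hP_ode n, eval_add, eval_sub, eval_mul, eval_C, eval_X,
    eval_pow, eval_one, eval_zero, derivative_zero, Pi.mul_apply]
  generalize Real.exp (-x ^ 2) = w
  generalize eval x (derivative (derivative (hP m))) = f2
  generalize eval x (derivative (hP m)) = f1
  generalize eval x (hP m) = f
  generalize eval x (derivative (hP n)) = g1
  generalize eval x (hP n) = g
  simp
  field_simp
  ring

theorem stmt3 (m n : ℕ) (hm : m ∉ ({1, 2} : Set ℕ)) (hn : n ∉ ({1, 2} : Set ℕ)) :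
    ∫ x : ℝ, H1exc m x * H1exc n x * Real.exp (-x ^ 2) / (4 * (1 + 2 * x ^ 2)) ^ 2
      = if m = n then
          Real.sqrt Real.pi * 2 ^ (n + 2) * (Nat.factorial n) * (((n : ℝ) - 1) * ((n : ℝ) - 2))
        else 0 := by
  have h1 := integ_rat (hN m * hN n) 2
  have h2 := (integ_poly (hP m * hP n)).const_mul (4 * (((n : ℝ) - 1) * ((n : ℝ) - 2)))
  have h := integral_eq_zero_of_hasDerivAt_of_integrable (key m n) (h1.sub h2)
    (integ_rat (hQ m n) 1)
  rw [integral_sub h1 h2, integral_const_mul, orth, sub_eq_zero] at h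
  have e : (fun x : ℝ => H1exc m x * H1exc n x * Real.exp (-x ^ 2) / (4 * (1 + 2 * x ^ 2)) ^ 2)
      = fun x => (hN m * hN n).eval x * Real.exp (-x ^ 2) / (1 + 2 * x ^ 2) ^ 2 := by
    funext x
    have hp : (1 + 2 * x ^ 2) ≠ 0 := by positivity
    rw [H1exc_eq, H1exc_eq, eval_mul]
    field_simp
  rw [e, h]
  split_ifs
  · ring
  · simp
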